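/- arXiv:2502.18715 — 5 statements merged into one kernel-verified Lean document; each statement's English description precedes it below -/
import Mathlib

section
/- For any n ≥ 1, real numbers p_1, …, p_n ∈ [0,1], and any integer d with 0 ≤ d ≤ n, the Poisson-binomial probability mass function satisfies the discrete Fourier inversion formula PB(d) = (n+1)^{−1} Σ_{l=0}^{n} exp(−𝒊 ω l d) · ∏_{i=1}^{n} (1 − p_i + p_i exp(𝒊 ω l)), where ω = 2π/(n+1) and 𝒊 = √(−1) (the right-hand side, a priori a complex number, equals the real number PB(d)). -/
open Finset

/-- The Poisson-binomial probability mass function with success probabilities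
`p 1, …, p n`, evaluated at `d`: the enumeration formula
`PB(d) = Σ_{A ⊆ {1,…,n}, |A| = d} (∏_{i ∈ A} p i)(∏_{i ∉ A} (1 − p i))`. -/
noncomputable def PBpmf (n : ℕ) (p : Fin n → ℝ) (d : ℕ) : ℝ :=
  ∑ A ∈ Finset.powersetCard d (Finset.univ : Finset (Fin n)),
    (∏ i ∈ A, p i) * ∏ i ∈ Aᶜ, (1 - p i)

lemma root_orthogonality (n : ℕ) (z : ℂ) (hz : IsPrimitiveRoot z (n + 1)) (d k : ℕ)
    (hd : d ≤ n) (hk : k ≤ n) :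
    ∑ l ∈ Finset.range (n + 1), ((z ^ l) ^ d)⁻¹ * (z ^ l) ^ k
      = if k = d then (n : ℂ) + 1 else 0 := by
  have hz0 : z ≠ 0 := hz.ne_zero (by omega)
  split_ifs with h
  · subst h
    have : ∀ l ∈ Finset.range (n + 1), ((z ^ l) ^ k)⁻¹ * (z ^ l) ^ k = 1 := fun l _ =>
      inv_mul_cancel₀ (pow_ne_zero _ (pow_ne_zero _ hz0))
    rw [Finset.sum_congr rfl this]
    simp
  · have h1 : (z ^ d)⁻¹ * z ^ k ≠ 1 := by
      intro h2
      apply h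
      apply hz.pow_inj (by omega) (by omega)
      have := pow_ne_zero d hz0
      field_simp at h2
      exact h2
    have h3 : ∀ l ∈ Finset.range (n + 1), ((z ^ l) ^ d)⁻¹ * (z ^ l) ^ k
        = ((z ^ d)⁻¹ * z ^ k) ^ l := by
      intro l _
      rw [mul_pow, inv_pow, pow_right_comm z d l, pow_right_comm z k l]
    rw [Finset.sum_congr rfl h3, geom_sum_eq h1, mul_pow, inv_pow, pow_right_comm z d,
      pow_right_comm z k, hz.pow_eq_one]
    simp

/-- **Discrete Fourier inversion for the Poisson-binomial pmf.** With
`ω = 2π/(n+1)`, for every `0 ≤ d ≤ n`,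
`PB(d) = (n+1)⁻¹ Σ_{l=0}^{n} exp(−𝒊 ω l d) ∏_{i=1}^{n} (1 − p i + p i exp(𝒊 ω l))`. -/
theorem poisson_binomial_dft_inversion (n : ℕ) (hn : 1 ≤ n) (p : Fin n → ℝ)
    (hp0 : ∀ i, 0 ≤ p i) (hp1 : ∀ i, p i ≤ 1) (d : ℕ) (hd : d ≤ n) :
    (PBpmf n p d : ℂ)
      = ((n : ℂ) + 1)⁻¹ *
          ∑ l ∈ Finset.range (n + 1),
            Complex.exp (-(Complex.I * (2 * Real.pi / (n + 1)) * l * d)) *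
              ∏ i, (1 - (p i : ℂ) + (p i : ℂ) *
                Complex.exp (Complex.I * (2 * Real.pi / (n + 1)) * l)) := by
  have hz : IsPrimitiveRoot (Complex.exp (Complex.I * (2 * Real.pi / (n + 1)))) (n + 1) := by
    have := Complex.isPrimitiveRoot_exp (n + 1) (by omega)
    convert this using 2
    push_cast
    ring
  have e1 : ∀ l : ℕ, Complex.exp (Complex.I * (2 * Real.pi / (n + 1)) * l)
      = Complex.exp (Complex.I * (2 * Real.pi / (n + 1))) ^ l := by
    intro l
    rw [← Complex.exp_nat_mul, mul_comm]
  have e2 : ∀ l : ℕ, Complex.exp (-(Complex.I * (2 * Real.pi / (n + 1)) * l * d))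
      = ((Complex.exp (Complex.I * (2 * Real.pi / (n + 1))) ^ l) ^ d)⁻¹ := by
    intro l
    rw [← e1, Complex.exp_neg, ← Complex.exp_nat_mul, mul_comm (d : ℂ)]
  simp only [e1, e2]
  generalize Complex.exp (Complex.I * (2 * Real.pi / (n + 1))) = z at hz
  have e3 : ∀ l : ℕ, ∏ i, (1 - (p i : ℂ) + (p i : ℂ) * z ^ l)
      = ∑ A ∈ (Finset.univ : Finset (Fin n)).powerset,
        ((∏ i ∈ A, (p i : ℂ)) * ∏ i ∈ Aᶜ, (1 - (p i : ℂ))) * (z ^ l) ^ A.card := by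
    intro l
    simp only [add_comm (1 - _ : ℂ)]
    rw [Finset.prod_add]
    refine Finset.sum_congr rfl fun A _ => ?_
    rw [Finset.prod_mul_distrib, Finset.prod_const, Finset.compl_eq_univ_sdiff]
    ring
  simp only [e3, Finset.mul_sum]
  rw [Finset.sum_comm]
  have e4 : ∀ A ∈ (Finset.univ : Finset (Fin n)).powerset,
      ∑ l ∈ Finset.range (n + 1), ((n : ℂ) + 1)⁻¹ * (((z ^ l) ^ d)⁻¹ *
        (((∏ i ∈ A, (p i : ℂ)) * ∏ i ∈ Aᶜ, (1 - (p i : ℂ))) * (z ^ l) ^ A.card))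
      = if A.card = d then (∏ i ∈ A, (p i : ℂ)) * ∏ i ∈ Aᶜ, (1 - (p i : ℂ)) else 0 := by
    intro A _
    have hA : A.card ≤ n := by simpa using Finset.card_le_univ A
    have hn0 : (n : ℂ) + 1 ≠ 0 := by exact_mod_cast Nat.succ_ne_zero n
    have := root_orthogonality n z hz d A.card hd hA
    trans ((n : ℂ) + 1)⁻¹ * ((∏ i ∈ A, (p i : ℂ)) * ∏ i ∈ Aᶜ, (1 - (p i : ℂ))) *
      ∑ l ∈ Finset.range (n + 1), ((z ^ l) ^ d)⁻¹ * (z ^ l) ^ A.card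
    · rw [Finset.mul_sum]
      refine Finset.sum_congr rfl fun l _ => ?_
      ring
    · rw [this]
      split_ifs
      · field_simp
      · simp
  rw [Finset.sum_congr rfl e4, ← Finset.sum_filter, ← Finset.powersetCard_eq_filter, PBpmf]
  push_cast
  rfl
end

section
/- Let n ≥ 1 and p_1, …, p_n ∈ [0,1], and set μ = Σ_{i=1}^{n} p_i and p̄ = μ/n. Then the average error of the Poisson approximation to the Poisson-binomial distribution satisfies (1/n) Σ_{d=0}^{n} | PB(d) − μ^d e^{−μ}/d! | ≤ (2/n) Σ_{i=1}^{n} p_i² = 2 Σ_{i=1}^{n} (p_i − p̄)²/n + 2 p̄². -/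
open Finset

/-- Truncated ℓ¹ norm of a power series. -/
noncomputable def truncNorm (N : ℕ) (f : PowerSeries ℝ) : ℝ :=
  ∑ d ∈ Finset.range N, |PowerSeries.coeff d f|

lemma truncNorm_nonneg (N : ℕ) (f : PowerSeries ℝ) : 0 ≤ truncNorm N f :=
  Finset.sum_nonneg fun _ _ => abs_nonneg _

lemma truncNorm_add_le (N : ℕ) (f g : PowerSeries ℝ) :
    truncNorm N (f + g) ≤ truncNorm N f + truncNorm N g := by
  unfold truncNorm
  rw [← Finset.sum_add_distrib]
  refine Finset.sum_le_sum fun d _ => ?_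
  rw [map_add]
  exact abs_add_le _ _

lemma truncNorm_mul_le (N : ℕ) (f g : PowerSeries ℝ) :
    truncNorm N (f * g) ≤ truncNorm N f * truncNorm N g := by
  unfold truncNorm
  rw [Finset.sum_mul_sum, ← Finset.sum_product']
  refine le_trans ?_ (Finset.sum_fiberwise_le_sum_of_sum_fiber_nonneg
    (t := Finset.range N) (g := fun x : ℕ × ℕ => x.1 + x.2)
    fun y _ => Finset.sum_nonneg fun x _ => by positivity)
  refine Finset.sum_le_sum fun d hd => ?_
  have hd' := Finset.mem_range.1 hd
  have : (Finset.range N ×ˢ Finset.range N).filter (fun x : ℕ × ℕ => x.1 + x.2 = d)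
      = Finset.HasAntidiagonal.antidiagonal d := by
    ext ⟨a, b⟩
    simp only [Finset.mem_filter, Finset.mem_product, Finset.mem_range, Finset.HasAntidiagonal.mem_antidiagonal]
    omega
  rw [this, PowerSeries.coeff_mul]
  refine (Finset.abs_sum_le_sum_abs _ _).trans (le_of_eq ?_)
  exact Finset.sum_congr rfl fun x _ => abs_mul _ _

lemma truncNorm_one_le (N : ℕ) : truncNorm N 1 ≤ 1 := by
  unfold truncNorm
  have : ∀ d, |PowerSeries.coeff d (1 : PowerSeries ℝ)| = if d = 0 then 1 else 0 := by
    intro d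
    rw [PowerSeries.coeff_one]
    split_ifs <;> simp
  simp only [this, Finset.sum_ite_eq']
  split_ifs <;> norm_num

lemma truncNorm_prod_le {ι : Type*} (N : ℕ) (s : Finset ι) (a : ι → PowerSeries ℝ)
    (ha : ∀ i, truncNorm N (a i) ≤ 1) : truncNorm N (∏ i ∈ s, a i) ≤ 1 := by
  classical
  induction s using Finset.induction_on with
  | empty => simpa using truncNorm_one_le N
  | insert i s hi ih =>
    rw [Finset.prod_insert hi]
    exact (truncNorm_mul_le _ _ _).trans (mul_le_one₀ (ha i) (truncNorm_nonneg _ _) ih)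

lemma truncNorm_prod_sub_le {ι : Type*} (N : ℕ) (s : Finset ι) (a b : ι → PowerSeries ℝ)
    (ha : ∀ i, truncNorm N (a i) ≤ 1) (hb : ∀ i, truncNorm N (b i) ≤ 1) :
    truncNorm N (∏ i ∈ s, a i - ∏ i ∈ s, b i) ≤ ∑ i ∈ s, truncNorm N (a i - b i) := by
  classical
  induction s using Finset.induction_on with
  | empty => simp [truncNorm]
  | insert i s hi ih =>
    rw [Finset.prod_insert hi, Finset.prod_insert hi, Finset.sum_insert hi]
    have e : a i * ∏ i ∈ s, a i - b i * ∏ i ∈ s, b i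
        = (a i - b i) * ∏ i ∈ s, a i + b i * (∏ i ∈ s, a i - ∏ i ∈ s, b i) := by ring
    rw [e]
    refine (truncNorm_add_le _ _ _).trans (add_le_add ?_ ?_)
    · exact (truncNorm_mul_le _ _ _).trans
        (mul_le_of_le_one_right (truncNorm_nonneg _ _) (truncNorm_prod_le N s a ha))
    · exact (truncNorm_mul_le _ _ _).trans
        ((mul_le_of_le_one_left (truncNorm_nonneg _ _) (hb i)).trans ih)

/-- Bernoulli generating function. -/
noncomputable def bernSer (q : ℝ) : PowerSeries ℝ :=
  PowerSeries.C q * PowerSeries.X + PowerSeries.C (1 - q)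

/-- Poisson generating function. -/
noncomputable def poisSer (q : ℝ) : PowerSeries ℝ :=
  PowerSeries.C (Real.exp (-q)) * PowerSeries.rescale q (PowerSeries.exp ℝ)

lemma coeff_poisSer (q : ℝ) (d : ℕ) :
    PowerSeries.coeff d (poisSer q) = q ^ d * Real.exp (-q) / (Nat.factorial d : ℝ) := by
  simp [poisSer, PowerSeries.coeff_rescale, PowerSeries.coeff_exp]
  ring

lemma poisSer_add (a b : ℝ) : poisSer (a + b) = poisSer a * poisSer b := by
  unfold poisSer
  rw [← PowerSeries.exp_mul_exp_eq_exp_add, neg_add, Real.exp_add, map_mul]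
  ring

lemma poisSer_sum {ι : Type*} (s : Finset ι) (p : ι → ℝ) :
    poisSer (∑ i ∈ s, p i) = ∏ i ∈ s, poisSer (p i) := by
  classical
  induction s using Finset.induction_on with
  | empty => simp [poisSer, PowerSeries.rescale_zero]
  | insert i s hi ih => rw [Finset.prod_insert hi, Finset.sum_insert hi, poisSer_add, ih]

lemma coeff_prod_bernSer (n : ℕ) (p : Fin n → ℝ) (d : ℕ) :
    PowerSeries.coeff d (∏ i, bernSer (p i)) = PBpmf n p d := by
  unfold bernSer PBpmf
  rw [Finset.prod_add, map_sum, Finset.powersetCard_eq_filter, Finset.sum_filter]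
  refine Finset.sum_congr rfl fun A _ => ?_
  rw [Finset.prod_mul_distrib, Finset.prod_const, ← map_prod, ← map_prod,
    mul_assoc, mul_comm (PowerSeries.X ^ _), PowerSeries.coeff_C_mul, PowerSeries.coeff_C_mul,
    PowerSeries.coeff_X_pow, ← Finset.compl_eq_univ_sdiff]
  by_cases h : A.card = d
  · simp [h]
  · simp [h, Ne.symm h]

lemma sum_pois_le (N : ℕ) (q : ℝ) (hq : 0 ≤ q) :
    ∑ d ∈ Finset.range N, q ^ d * Real.exp (-q) / (Nat.factorial d : ℝ) ≤ 1 := by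
  have h := Real.sum_le_exp_of_nonneg hq N
  calc ∑ d ∈ Finset.range N, q ^ d * Real.exp (-q) / (Nat.factorial d : ℝ)
      = (∑ d ∈ Finset.range N, q ^ d / (Nat.factorial d : ℝ)) * Real.exp (-q) := by
        rw [Finset.sum_mul]
        exact Finset.sum_congr rfl fun _ _ => by ring
    _ ≤ Real.exp q * Real.exp (-q) := by gcongr
    _ = 1 := by rw [← Real.exp_add]; simp

lemma truncNorm_poisSer_le (N : ℕ) (q : ℝ) (hq : 0 ≤ q) : truncNorm N (poisSer q) ≤ 1 := by
  refine le_trans (le_of_eq ?_) (sum_pois_le N q hq)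
  refine Finset.sum_congr rfl fun d _ => ?_
  rw [coeff_poisSer, abs_of_nonneg (by positivity)]

lemma coeff_bernSer (q : ℝ) (d : ℕ) :
    PowerSeries.coeff d (bernSer q) = if d = 0 then 1 - q else if d = 1 then q else 0 := by
  rcases d with _ | _ | d <;>
    simp [bernSer, PowerSeries.coeff_C]

lemma truncNorm_bernSer_le (N : ℕ) (q : ℝ) (hq : 0 ≤ q) (hq1 : q ≤ 1) :
    truncNorm (N + 2) (bernSer q) ≤ 1 := by
  unfold truncNorm
  rw [Finset.sum_range_succ', Finset.sum_range_succ']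
  simp [coeff_bernSer, abs_of_nonneg hq, abs_of_nonneg (sub_nonneg.2 hq1)]

lemma truncNorm_sub_le (N : ℕ) (q : ℝ) (hq : 0 ≤ q) :
    truncNorm (N + 2) (bernSer q - poisSer q) ≤ 2 * q ^ 2 := by
  have h1 := sum_pois_le (N + 2) q hq
  rw [Finset.sum_range_succ', Finset.sum_range_succ'] at h1
  unfold truncNorm
  rw [Finset.sum_range_succ', Finset.sum_range_succ']
  simp only [map_sub, coeff_bernSer, coeff_poisSer]
  have e : ∀ k : ℕ, |(if k + 1 + 1 = 0 then 1 - q else if k + 1 + 1 = 1 then q else 0)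
      - q ^ (k + 1 + 1) * Real.exp (-q) / (Nat.factorial (k + 1 + 1) : ℝ)|
      = q ^ (k + 1 + 1) * Real.exp (-q) / (Nat.factorial (k + 1 + 1) : ℝ) := by
    intro k
    rw [if_neg (by omega), if_neg (by omega), zero_sub, abs_neg, abs_of_nonneg (by positivity)]
  simp only [e]
  have h2 : 1 - q ≤ Real.exp (-q) := by linarith [Real.add_one_le_exp (-q)]
  have h3 : Real.exp (-q) ≤ 1 := Real.exp_le_one_iff.2 (by linarith)
  simp at h1 ⊢
  rw [abs_of_nonneg (by nlinarith : 0 ≤ q - q * Real.exp (-q)),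
    abs_of_nonpos (by linarith : 1 - q - Real.exp (-q) ≤ 0)]
  nlinarith

/-- **Le Cam's bound and the bias–variance decomposition.** With
`μ = Σ p i` and `p̄ = μ/n`, the average error of the Poisson approximation
to the Poisson-binomial distribution satisfies
`(1/n) Σ_{d=0}^{n} |PB(d) − μ^d e^{−μ}/d!| ≤ (2/n) Σ p i² = 2 Σ (p i − p̄)²/n + 2 p̄²`. -/
theorem lecam_poisson_approximation (n : ℕ) (hn : 1 ≤ n) (p : Fin n → ℝ)
    (hp0 : ∀ i, 0 ≤ p i) (hp1 : ∀ i, p i ≤ 1) :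
    ((1 : ℝ) / n) *
        ∑ d ∈ Finset.range (n + 1),
          |PBpmf n p d - (∑ i, p i) ^ d * Real.exp (-(∑ i, p i)) / (Nat.factorial d : ℝ)|
      ≤ (2 / (n : ℝ)) * ∑ i, (p i) ^ 2
    ∧ (2 / (n : ℝ)) * ∑ i, (p i) ^ 2
      = 2 * (∑ i, (p i - (∑ j, p j) / n) ^ 2) / n + 2 * ((∑ j, p j) / n) ^ 2 := by
  have hn0 : (n : ℝ) ≠ 0 := by positivity
  constructor
  · rw [div_mul_eq_mul_div, div_mul_eq_mul_div, one_mul]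
    gcongr
    obtain ⟨m, rfl⟩ : ∃ m, n = m + 1 := ⟨n - 1, by omega⟩
    have h := truncNorm_prod_sub_le (m + 2) Finset.univ (fun i => bernSer (p i))
      (fun i => poisSer (p i)) (fun i => truncNorm_bernSer_le m _ (hp0 i) (hp1 i))
      (fun i => truncNorm_poisSer_le _ _ (hp0 i))
    rw [← poisSer_sum] at h
    have h' := h.trans (Finset.sum_le_sum fun i _ => truncNorm_sub_le m (p i) (hp0 i))
    rw [← Finset.mul_sum] at h'
    simpa only [truncNorm, map_sub, coeff_prod_bernSer, coeff_poisSer] using h'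
  · have e : ∑ i, (p i - (∑ j, p j) / n) ^ 2
        = ∑ i, p i ^ 2 - (∑ j, p j) ^ 2 / n := by
      simp only [sub_sq, Finset.sum_add_distrib, Finset.sum_sub_distrib, ← Finset.sum_mul,
        ← Finset.mul_sum, Finset.sum_const, Finset.card_univ, Fintype.card_fin, nsmul_eq_mul]
      field_simp
      ring
    rw [e]
    field_simp
    ring
end

section
/- Let R be a nonempty finite set, r : R → (0,∞), and j₁ ∈ R. For λ > 0 define p_i(λ) = 1 − exp(−r_i λ) and μ(λ) = Σ_{i ∈ R} p_i(λ). Then as λ → 0⁺, the ratio of the exact probability that only subject j₁ fails to the Poisson approximation of the probability that exactly one subject fails converges to the Cox partial likelihood term: [ p_{j₁}(λ) · ∏_{i ∈ R∖{j₁}} (1 − p_i(λ)) ] / [ μ(λ) e^{−μ(λ)} ] → r_{j₁} / Σ_{i ∈ R} r_i. -/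
open Finset Filter Topology

/-- The event probability `p_i(λ) = 1 − exp(−r_i λ)` of subject `i` at an event
time, given risk score `r i` and baseline hazard increment `λ`. -/
noncomputable def pHaz {ι : Type*} (r : ι → ℝ) (l : ℝ) (i : ι) : ℝ :=
  1 - Real.exp (-(r i * l))

/-- The Poisson-approximation mean `μ(λ) = Σ_{i ∈ R} p_i(λ)`. -/
noncomputable def muHaz {ι : Type*} [Fintype ι] (r : ι → ℝ) (l : ℝ) : ℝ :=
  ∑ i, pHaz r l i

/-- **The approximate partial likelihood term is the Poisson approximation of
the accurate one (no ties).** As `λ → 0⁺`, the ratio of the exact probability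
that only subject `j₁` fails to the Poisson approximation of the probability
that exactly one subject fails converges to `r j₁ / Σ_{i ∈ R} r i`. -/
theorem apl_poisson_approx_no_ties {ι : Type*} [Fintype ι] [Nonempty ι]
    [DecidableEq ι] (r : ι → ℝ) (hr : ∀ i, 0 < r i) (j₁ : ι) :
    Filter.Tendsto
      (fun l : ℝ =>
        (pHaz r l j₁ * ∏ i ∈ Finset.univ.erase j₁, (1 - pHaz r l i))
          / (muHaz r l * Real.exp (-muHaz r l)))
      (𝓝[>] (0 : ℝ))
      (𝓝 (r j₁ / ∑ i, r i)) := by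
  have hp : ∀ i, Tendsto (fun l : ℝ => l⁻¹ * pHaz r l i) (𝓝[>] (0 : ℝ)) (𝓝 (r i)) := by
    intro i
    have h : HasDerivAt (fun l : ℝ => pHaz r l i) (r i) 0 := by
      unfold pHaz
      have h1 : HasDerivAt (fun l : ℝ => -(r i * l)) (-(r i * 1)) 0 :=
        ((hasDerivAt_id (0 : ℝ)).const_mul (r i)).neg
      have h2 := h1.exp.const_sub 1
      simpa using h2
    have h3 := h.tendsto_slope_zero_right
    simpa [pHaz] using h3
  have hp0 : ∀ i, Tendsto (fun l : ℝ => pHaz r l i) (𝓝[>] (0 : ℝ)) (𝓝 0) := by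
    intro i
    have hc : Continuous (fun l : ℝ => pHaz r l i) := by
      unfold pHaz
      fun_prop
    have h := (hc.tendsto 0).mono_left (nhdsWithin_le_nhds (s := Set.Ioi 0))
    simpa [pHaz] using h
  have hmu : Tendsto (fun l : ℝ => l⁻¹ * muHaz r l) (𝓝[>] (0 : ℝ)) (𝓝 (∑ i, r i)) := by
    simp only [muHaz, Finset.mul_sum]
    exact tendsto_finsetSum _ (fun i _ => hp i)
  have hmu0 : Tendsto (fun l : ℝ => muHaz r l) (𝓝[>] (0 : ℝ)) (𝓝 0) := by
    have h := tendsto_finsetSum (Finset.univ : Finset ι) (fun i _ => hp0 i)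
    simpa [muHaz] using h
  have hE : Tendsto (fun l : ℝ => Real.exp (-muHaz r l)) (𝓝[>] (0 : ℝ)) (𝓝 1) := by
    have h := (Real.continuous_exp.tendsto _).comp hmu0.neg
    simpa [Function.comp_def] using h
  have hP : Tendsto (fun l : ℝ => ∏ i ∈ Finset.univ.erase j₁, (1 - pHaz r l i))
      (𝓝[>] (0 : ℝ)) (𝓝 1) := by
    have h := tendsto_finsetProd (Finset.univ.erase j₁)
      (fun i _ => (hp0 i).const_sub 1)
    simpa using h
  have hS : (∑ i, r i) * 1 ≠ 0 := by
    rw [mul_one]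
    exact (Finset.sum_pos (fun i _ => hr i) Finset.univ_nonempty).ne'
  have hmain := ((hp j₁).mul hP).div (hmu.mul hE) hS
  rw [mul_one, mul_one] at hmain
  refine hmain.congr' ?_
  filter_upwards [self_mem_nhdsWithin] with l hl
  have hl' : l⁻¹ ≠ 0 := inv_ne_zero (ne_of_gt hl)
  simp only [Pi.div_apply, mul_assoc]
  exact mul_div_mul_left _ _ hl'
end

section
/- Let R be a nonempty finite set, r : R → (0,∞), and D ⊆ R a nonempty subset with |D| = d. For λ > 0 define p_i(λ) = 1 − exp(−r_i λ) and μ(λ) = Σ_{i ∈ R} p_i(λ). Then as λ → 0⁺, [ ∏_{i ∈ D} p_i(λ) · ∏_{i ∈ R∖D} (1 − p_i(λ)) ] / [ μ(λ)^d e^{−μ(λ)}/d! ] → d! · (∏_{i ∈ D} r_i) / (Σ_{i ∈ R} r_i)^d; that is, the accurate partial likelihood term with denominator replaced by its Poisson approximation converges to the Breslow-corrected partial likelihood term (up to the factor d!). -/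
open Finset Filter Topology

/-- **The Breslow correction is the Poisson approximation of the accurate
partial likelihood term (with ties).** As `λ → 0⁺`, the accurate partial
likelihood term with denominator replaced by its Poisson approximation
converges to `d! (∏_{i ∈ D} r i)/(Σ_{i ∈ R} r i)^d`. -/
theorem apl_poisson_approx_breslow {ι : Type*} [Fintype ι] [Nonempty ι]
    [DecidableEq ι] (r : ι → ℝ) (hr : ∀ i, 0 < r i)
    (D : Finset ι) (hD : D.Nonempty) (d : ℕ) (hd : D.card = d) :
    Filter.Tendsto
      (fun l : ℝ =>
        ((∏ i ∈ D, pHaz r l i) * ∏ i ∈ Finset.univ \ D, (1 - pHaz r l i))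
          / (muHaz r l ^ d * Real.exp (-muHaz r l) / (Nat.factorial d : ℝ)))
      (𝓝[>] (0 : ℝ))
      (𝓝 ((Nat.factorial d : ℝ) * (∏ i ∈ D, r i) / (∑ i, r i) ^ d)) := by
  have hp : ∀ i, Tendsto (fun l : ℝ => pHaz r l i / l) (𝓝[>] (0 : ℝ)) (𝓝 (r i)) := by
    intro i
    have h : HasDerivAt (fun l : ℝ => pHaz r l i) (r i) 0 := by
      have h1 : HasDerivAt (fun l : ℝ => -(r i * l)) (-(r i * 1)) 0 :=
        ((hasDerivAt_id (0 : ℝ)).const_mul (r i)).neg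
      have h2 := (h1.exp).const_sub 1
      simpa [pHaz] using h2
    have h3 := h.tendsto_slope_zero_right
    refine h3.congr fun l => ?_
    simp [pHaz, div_eq_inv_mul]
  have hp0 : ∀ i, Tendsto (fun l : ℝ => pHaz r l i) (𝓝[>] (0 : ℝ)) (𝓝 0) := by
    intro i
    have hc : Continuous (fun l : ℝ => pHaz r l i) := by
      unfold pHaz
      fun_prop
    have h := hc.tendsto 0
    have h0 : pHaz r 0 i = 0 := by simp [pHaz]
    rw [h0] at h
    exact h.mono_left nhdsWithin_le_nhds
  have hmu : Tendsto (fun l : ℝ => muHaz r l / l) (𝓝[>] (0 : ℝ)) (𝓝 (∑ i, r i)) := by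
    refine (tendsto_finsetSum Finset.univ fun i _ => hp i).congr fun l => ?_
    simp [muHaz, Finset.sum_div]
  have hmu0 : Tendsto (fun l : ℝ => muHaz r l) (𝓝[>] (0 : ℝ)) (𝓝 0) := by
    simpa [muHaz] using tendsto_finsetSum Finset.univ fun i _ => hp0 i
  have hS : 0 < ∑ i, r i := Finset.sum_pos (fun i _ => hr i) Finset.univ_nonempty
  have hf : (Nat.factorial d : ℝ) ≠ 0 := by exact_mod_cast Nat.factorial_ne_zero d
  have hA := tendsto_finsetProd D fun i _ => hp i
  have hB : Tendsto (fun l : ℝ => ∏ i ∈ Finset.univ \ D, (1 - pHaz r l i))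
      (𝓝[>] (0 : ℝ)) (𝓝 1) := by
    simpa using tendsto_finsetProd (Finset.univ \ D) fun i _ => (hp0 i).const_sub 1
  have hE : Tendsto (fun l : ℝ => Real.exp (-muHaz r l)) (𝓝[>] (0 : ℝ)) (𝓝 1) := by
    simpa [Function.comp_def] using (Real.continuous_exp.tendsto (-0)).comp hmu0.neg
  have hden := ((hmu.pow d).mul hE).div_const (Nat.factorial d : ℝ)
  have hne : (∑ i, r i) ^ d * 1 / (Nat.factorial d : ℝ) ≠ 0 := by positivity
  have hmain := (hA.mul hB).div hden hne
  have hlim : (∏ i ∈ D, r i) * 1 / ((∑ i, r i) ^ d * 1 / (Nat.factorial d : ℝ))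
      = (Nat.factorial d : ℝ) * (∏ i ∈ D, r i) / (∑ i, r i) ^ d := by
    field_simp
  rw [hlim] at hmain
  refine hmain.congr' ?_
  filter_upwards [self_mem_nhdsWithin] with l hl
  have hl0 : l ^ d ≠ 0 := pow_ne_zero _ (ne_of_gt hl)
  simp only [Pi.div_apply]
  rw [Finset.prod_div_distrib, Finset.prod_const, hd, div_pow]
  rw [← mul_div_mul_right _ (muHaz r l ^ d * Real.exp (-muHaz r l) / (Nat.factorial d : ℝ))
    (inv_ne_zero hl0)]
  congr 1 <;> ring
end

section
/- Let R be a nonempty finite set, r : R → (0,∞), and D ⊆ R a nonempty subset with |D| = d. For λ > 0 define p_i(λ) = 1 − exp(−r_i λ). Then as λ → 0⁺, the accurate partial likelihood term computed with the enumeration form of the Poisson-binomial denominator converges to the Cox-corrected partial likelihood term: [ ∏_{i ∈ D} p_i(λ) · ∏_{i ∈ R∖D} (1 − p_i(λ)) ] / [ Σ_{A ⊆ R, |A| = d} ( ∏_{i ∈ A} p_i(λ) · ∏_{i ∈ R∖A} (1 − p_i(λ)) ) ] → ( ∏_{i ∈ D} r_i ) / ( Σ_{A ⊆ R, |A| = d}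 ∏_{i ∈ A} r_i ). -/
open Finset Filter Topology

/-- `p_i(l) / l → r i`. -/
lemma tendsto_pHaz_div {ι : Type*} (r : ι → ℝ) (i : ι) :
    Filter.Tendsto (fun l : ℝ => pHaz r l i / l) (𝓝[>] (0 : ℝ)) (𝓝 (r i)) := by
  have h : HasDerivAt (fun l : ℝ => pHaz r l i) (r i) 0 := by
    unfold pHaz
    have h1 : HasDerivAt (fun l : ℝ => -(r i * l)) (-(r i * 1)) 0 :=
      ((hasDerivAt_id (0 : ℝ)).const_mul (r i)).neg
    simpa using h1.exp.const_sub 1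
  have h2 := h.tendsto_slope_zero_right
  refine h2.congr fun l => ?_
  simp [pHaz, div_eq_inv_mul]

/-- `1 - p_i(l) → 1`. -/
lemma tendsto_one_sub_pHaz {ι : Type*} (r : ι → ℝ) (i : ι) :
    Filter.Tendsto (fun l : ℝ => 1 - pHaz r l i) (𝓝[>] (0 : ℝ)) (𝓝 1) := by
  have h : Continuous (fun l : ℝ => 1 - pHaz r l i) := by
    unfold pHaz
    fun_prop
  have h2 := (h.tendsto 0).mono_left (nhdsWithin_le_nhds (s := Set.Ioi (0 : ℝ)))
  simpa [pHaz] using h2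

/-- The scaled term for one subset. -/
lemma tendsto_term {ι : Type*} [Fintype ι] [DecidableEq ι] (r : ι → ℝ) (A : Finset ι) :
    Filter.Tendsto (fun l : ℝ =>
      (∏ i ∈ A, pHaz r l i / l) * ∏ i ∈ Finset.univ \ A, (1 - pHaz r l i))
      (𝓝[>] (0 : ℝ)) (𝓝 (∏ i ∈ A, r i)) := by
  have h1 := tendsto_finsetProd A (fun i _ => tendsto_pHaz_div r i)
  have h2 := tendsto_finsetProd (Finset.univ \ A) (fun i _ => tendsto_one_sub_pHaz r i)
  simpa using h1.mul h2

/-- **The Cox correction is the enumeration limit of the accurate partial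
likelihood term.** As `λ → 0⁺`, the accurate partial likelihood term computed
with the enumeration form of the Poisson-binomial denominator converges to
`(∏_{i ∈ D} r i)/(Σ_{A ⊆ R, |A| = d} ∏_{i ∈ A} r i)`. -/
theorem apl_enumeration_cox_correction {ι : Type*} [Fintype ι] [Nonempty ι]
    [DecidableEq ι] (r : ι → ℝ) (hr : ∀ i, 0 < r i)
    (D : Finset ι) (hD : D.Nonempty) (d : ℕ) (hd : D.card = d) :
    Filter.Tendsto
      (fun l : ℝ =>
        ((∏ i ∈ D, pHaz r l i) * ∏ i ∈ Finset.univ \ D, (1 - pHaz r l i))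
          / ∑ A ∈ Finset.powersetCard d (Finset.univ : Finset ι),
              (∏ i ∈ A, pHaz r l i) * ∏ i ∈ Finset.univ \ A, (1 - pHaz r l i))
      (𝓝[>] (0 : ℝ))
      (𝓝 ((∏ i ∈ D, r i)
        / ∑ A ∈ Finset.powersetCard d (Finset.univ : Finset ι), ∏ i ∈ A, r i)) := by
  have hsum : Filter.Tendsto (fun l : ℝ =>
      ∑ A ∈ Finset.powersetCard d (Finset.univ : Finset ι),
        (∏ i ∈ A, pHaz r l i / l) * ∏ i ∈ Finset.univ \ A, (1 - pHaz r l i))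
      (𝓝[>] (0 : ℝ))
      (𝓝 (∑ A ∈ Finset.powersetCard d (Finset.univ : Finset ι), ∏ i ∈ A, r i)) :=
    tendsto_finsetSum _ (fun A _ => tendsto_term r A)
  have hpos : 0 < ∑ A ∈ Finset.powersetCard d (Finset.univ : Finset ι), ∏ i ∈ A, r i :=
    Finset.sum_pos (fun A _ => Finset.prod_pos fun i _ => hr i)
      ⟨D, Finset.mem_powersetCard.2 ⟨Finset.subset_univ D, hd⟩⟩
  refine ((tendsto_term r D).div hsum hpos.ne').congr' ?_
  filter_upwards [self_mem_nhdsWithin] with l hl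
  have hl0 : l ^ d ≠ 0 := pow_ne_zero _ (ne_of_gt hl)
  have key : ∀ A : Finset ι, A.card = d →
      (∏ i ∈ A, pHaz r l i / l) * ∏ i ∈ Finset.univ \ A, (1 - pHaz r l i)
        = ((∏ i ∈ A, pHaz r l i) * ∏ i ∈ Finset.univ \ A, (1 - pHaz r l i)) / l ^ d := by
    intro A hA
    rw [Finset.prod_div_distrib, Finset.prod_const, hA, div_mul_eq_mul_div]
  simp only [Pi.div_apply]
  rw [key D hd, Finset.sum_congr rfl
    (fun A hA => key A (Finset.mem_powersetCard.1 hA).2), ← Finset.sum_div,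
    div_div_div_cancel_right₀ hl0]
end
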